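/- Fix integers 0 < m < n, an integer d ≥ 1 and a prime p. Set μ = D_n(d), let r be the unique positive integer with D_m(r−1) ≤ μ < D_m(r), and set V = Σ_{k=0}^{d} k·L_n(k) and e = Σ_{k=0}^{r−1} k·L_m(k) + r·(μ − D_m(r−1)). Let T > 1 be a real number, let U be an open subset of ℤ_p^m, let ψ = (ψ_1,…,ψ_n) : U → ℚ_p^n satisfy the Taylor approximation property T_r, and let Σ be a closed ball in ℤ_p^m of radius ρ with ρ < (μ!)^{−1/e}·T^{−V/e}. Then for any points P_1,…,P_μ ∈ Σ ∩ U such that every coordinate of every ψ(P_j) is (the image in ℚ_p of) a rational integer of archimedean absolute value at most T, the μ×μ determinant det(ψ(P_j)^α), with rows indexed by the multi-indices α ∈ Δ_n(d) and columns by j ∈ {1,…,μ}, is equal to zero (here ψ(P)^α = ψ_1(P)^{α_1}⋯ψ_n(P)^{α_n}). -/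

import Mathlib

/-!
The determinant is the image in `ℚ_p` of a rational integer `N`, and the product formula gives
`1 ≤ |N| * |N|_p` if `N ≠ 0` (`one_le_abs_mul_padic_norm`). Two estimates contradict this.

* Archimedean: each of the `μ!` terms of the Leibniz formula is bounded by `T ^ V`, since `V` is the
  sum of `|α|` over `α ∈ Δ_n(d)`.
* `p`-adic: `|N|_p ≤ ρ ^ e`. All points lie within `ρ` of one of them, `y`, by the ultrametric
  inequality. Monomials in `ψ` inherit from `ψ` a Taylor approximation at `y`
  (`HasTaylor.monomial`, `HasTaylor.truncate`). Hence each row of the matrix is a combination,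
  with coefficients of norm at most `1`, of the common vectors `((P_j - y) ^ α)_j`, `|α| < r`, of
  size at most `ρ ^ |α|`, plus an error of size at most `ρ ^ r`. In the multilinear expansion of
  the determinant, a term using the same `α` in two rows vanishes, so every remaining term has size
  at most `ρ` to the least total weight of a choice without repetition
  (`norm_det_le_pow`). That least weight is attained by using every `α` once and the error term
  in the other rows, and it equals `e` (`exponent_identity`).

The bound on `ρ` says precisely that `ρ ^ e < (μ! * T ^ V)⁻¹`; here `e > 0` because `r ≥ 2`.
-/

open Finset

/-- The finset of multi-indices `α ∈ ℕ^m` with `|α| ≤ r - 1`. -/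
def multiIdx (m r : ℕ) : Finset (Fin m → ℕ) :=
  (Fintype.piFinset fun _ => Finset.range r).filter fun α => ∑ i, α i ≤ r - 1

/-- The finset `Δ_n(d)` of multi-indices `α ∈ ℕ^n` with `|α| ≤ d`. -/
def multiIdxLe (n d : ℕ) : Finset (Fin n → ℕ) :=
  (Fintype.piFinset fun _ => Finset.range (d + 1)).filter fun α => ∑ i, α i ≤ d

/-- The Taylor approximation property `T_r` for a map `f : X ⊆ K^m → K^n`. -/
def SatisfiesT {K : Type*} [NormedField K] (r m n : ℕ)
    (X : Set (Fin m → K)) (f : (Fin m → K) → (Fin n → K)) : Prop :=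
  IsOpen X ∧ ∀ y ∈ X, ∃ c : (Fin m → ℕ) → (Fin n → K),
    c 0 = f y ∧ (∀ α ∈ multiIdx m r, ‖c α‖ ≤ 1) ∧
    ∀ x ∈ X, ‖f x - ∑ α ∈ multiIdx m r, (∏ i, (x i - y i) ^ α i) • c α‖ ≤ ‖x - y‖ ^ r

/-! ### Counting multi-indices -/

lemma card_multiIdx_fiber {m r k : ℕ} (hm : 0 < m) (hk : k < r) :
    #{α ∈ multiIdx m r | ∑ i, α i = k} = (k + m - 1).choose (m - 1) := by
  have h1 : ({α ∈ multiIdx m r | ∑ i, α i = k} : Finset (Fin m → ℕ)) =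
      Finset.piAntidiag univ k := by
    ext α
    simp only [multiIdx, mem_filter, Fintype.mem_piFinset, mem_range, mem_piAntidiag,
      mem_univ, implies_true, and_true]
    refine ⟨fun h => h.2, fun h => ?_⟩
    replace h : ∑ i, α i = k := h
    refine ⟨⟨fun i => ?_, by omega⟩, h⟩
    have : α i ≤ ∑ i, α i := Finset.single_le_sum (f := α) (fun _ _ => Nat.zero_le _) (mem_univ i)
    omega
  rw [h1, ← Finset.map_sym_eq_piAntidiag, card_map, Finset.sym_univ, card_univ,
    Sym.card_sym_eq_choose, Fintype.card_fin]
  rw [show m + k - 1 = k + m - 1 by omega]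
  exact Nat.choose_symm_of_eq_add (by omega)

lemma sum_multiIdx {m r : ℕ} (hm : 0 < m) (hr : 0 < r) (f : ℕ → ℕ) :
    ∑ α ∈ multiIdx m r, f (∑ i, α i) =
      ∑ k ∈ range r, (k + m - 1).choose (m - 1) * f k := by
  rw [← Finset.sum_fiberwise_of_maps_to (g := fun α : Fin m → ℕ => ∑ i, α i) (t := range r)]
  · refine sum_congr rfl fun k hk => ?_
    rw [← card_multiIdx_fiber hm (mem_range.1 hk), ← smul_eq_mul, ← sum_const]
    refine sum_congr rfl fun α hα => ?_
    rw [(mem_filter.1 hα).2]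
  · intro α hα
    have := (mem_filter.1 hα).2
    rw [mem_range]
    omega

lemma sum_choose_eq {m r : ℕ} (hm : 0 < m) (hr : 0 < r) :
    ∑ k ∈ range r, (k + m - 1).choose (m - 1) = (r - 1 + m).choose m := by
  obtain ⟨m, rfl⟩ : ∃ a, m = a + 1 := ⟨m - 1, by omega⟩
  obtain ⟨r, rfl⟩ : ∃ a, r = a + 1 := ⟨r - 1, by omega⟩
  have := Nat.sum_range_add_choose r m
  simpa [← add_assoc] using this

/-- The weight identity behind the exponent `e`: if each of `μ` rows is assigned either a monomial
`α` of degree `< r`, with weight `|α|`, or the error term, with weight `r`, and no monomial is used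
twice, then the total weight is at least `r * μ` minus the deficits `r - |α|` of all monomials, and
this number is `e`. -/
lemma exponent_identity {m r μ e : ℕ} (hm : 0 < m) (hr : 0 < r)
    (hr₁ : (r - 1 + m).choose m ≤ μ)
    (he : e = ∑ k ∈ Finset.range r, k * (k + m - 1).choose (m - 1)
            + r * (μ - (r - 1 + m).choose m)) :
    e + ∑ α ∈ multiIdx m r, (r - ∑ i, α i) = r * μ := by
  rw [sum_multiIdx hm hr fun k => r - k, he, add_right_comm, ← sum_add_distrib]
  have : ∑ k ∈ range r, (k * (k + m - 1).choose (m - 1) + (k + m - 1).choose (m - 1) * (r - k))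
      = r * (r - 1 + m).choose m := by
    rw [← sum_choose_eq hm hr, mul_sum]
    refine sum_congr rfl fun k hk => ?_
    rw [mul_comm k, ← mul_add, mul_comm r, Nat.add_sub_of_le (mem_range.1 hk).le]
  rw [this, ← mul_add, Nat.add_sub_of_le hr₁]

/-! ### Ultrametric bounds for determinants -/

section Det

variable {K : Type*} [NormedField K] [IsUltrametricDist K] {ι : Type*} [Fintype ι] [DecidableEq ι]

lemma norm_det_le_prod (N : Matrix ι ι K) (b : ι → ℝ) (hb : ∀ i j, ‖N i j‖ ≤ b i) :
    ‖N.det‖ ≤ ∏ i, b i := by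
  rcases isEmpty_or_nonempty ι with _ | ⟨⟨i₀⟩⟩
  · simp
  have hb0 : ∀ i, 0 ≤ b i := fun i => (norm_nonneg _).trans (hb i i₀)
  rw [← Matrix.det_transpose, Matrix.det_apply]
  refine IsUltrametricDist.norm_sum_le_of_forall_le_of_nonneg (prod_nonneg fun i _ => hb0 i)
    fun σ _ => ?_
  have : ‖Equiv.Perm.sign σ • ∏ i, N.transpose (σ i) i‖ = ‖∏ i, N.transpose (σ i) i‖ := by
    rcases Int.units_eq_one_or (Equiv.Perm.sign σ) with h | h <;> simp [h]
  rw [this, norm_prod]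
  exact prod_le_prod (fun _ _ => norm_nonneg _) fun i _ => hb _ _

/-- A matrix whose rows are combinations of common rows `M α` of size `ρ ^ deg α`, up to an error
of size `ρ ^ r`, has determinant at most `ρ ^ e`, where `e = r * μ - ∑ α, (r - deg α)` and `μ` is
the number of rows. Expand multilinearly in the rows: a term using some `M α` twice vanishes, and
any other term has total weight at least `e`. -/
lemma norm_det_le_pow {I : Type*} [Fintype I] (deg : I → ℕ) (r e : ℕ)
    (hdeg : ∀ α, deg α ≤ r) (he : e + ∑ α, (r - deg α) = r * Fintype.card ι)
    (ρ : ℝ) (hρ0 : 0 ≤ ρ) (hρ1 : ρ ≤ 1) (F : Matrix ι ι K) (c : ι → I → K) (M : I → ι → K)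
    (hc : ∀ i α, ‖c i α‖ ≤ 1) (hM : ∀ α j, ‖M α j‖ ≤ ρ ^ deg α)
    (hR : ∀ i j, ‖F i j - ∑ α, c i α * M α j‖ ≤ ρ ^ r) :
    ‖F.det‖ ≤ ρ ^ e := by
  classical
  -- `none` stands for the error term, with coefficient `1` and weight `r`.
  let v : ι → Option I → K := fun i a => a.elim 1 (c i)
  let N : ι → Option I → ι → K :=
    fun i a => a.elim (fun j => F i j - ∑ α, c i α * M α j) M
  let w : Option I → ℕ := fun a => a.elim r deg
  have hF : F = fun i => ∑ a : Option I, fun j => v i a * N i a j := by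
    funext i j
    simp [Fintype.sum_option, v, N]
  have hdet : F.det = ∑ φ : ι → Option I,
      (Matrix.of fun i j => v i (φ i) * N i (φ i) j).det := by
    conv_lhs => rw [hF]
    exact (Matrix.detRowAlternating (R := K) (n := ι)).toMultilinearMap.map_sum _
  rw [hdet]
  refine IsUltrametricDist.norm_sum_le_of_forall_le_of_nonneg (pow_nonneg hρ0 _) fun φ _ => ?_
  have hmul := Matrix.det_mul_column (fun i => v i (φ i)) (Matrix.of fun i j => N i (φ i) j)
  simp only [Matrix.of_apply] at hmul
  rw [hmul]
  by_cases hφ : ∀ i i' α, φ i = some α → φ i' = some α → i = i'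
  · have hv : ‖∏ i, v i (φ i)‖ ≤ 1 := by
      rw [norm_prod]
      refine prod_le_one (fun _ _ => norm_nonneg _) fun i _ => ?_
      rcases φ i with _ | α
      · simp [v]
      · exact hc i α
    have hN : ‖(Matrix.of fun i j => N i (φ i) j).det‖ ≤ ∏ i, ρ ^ w (φ i) := by
      refine norm_det_le_prod _ _ fun i j => ?_
      simp only [Matrix.of_apply]
      rcases φ i with _ | α
      · exact hR i j
      · exact hM α j
    rw [prod_pow_eq_pow_sum] at hN
    have hw : e ≤ ∑ i, w (φ i) := by
      have h1 : ∑ i, w (φ i) + ∑ i, (r - w (φ i)) = r * Fintype.card ι := by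
        rw [← sum_add_distrib, mul_comm, ← smul_eq_mul, ← card_univ, ← sum_const]
        refine sum_congr rfl fun i _ => Nat.add_sub_of_le ?_
        rcases φ i with _ | α
        · exact le_rfl
        · exact hdeg α
      -- Only indices with `φ i = some α` carry a deficit, and there `φ` is injective.
      have h2 : ∑ i, (r - w (φ i)) ≤ ∑ α, (r - deg α) := by
        have h3 : ∀ i, r - w (φ i) = ∑ α, if φ i = some α then r - deg α else 0 := by
          intro i
          rcases φ i with _ | α
          · simp [w]
          · simp [w]
        simp_rw [h3]
        rw [sum_comm]
        refine sum_le_sum fun α _ => ?_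
        rw [← sum_filter, sum_const, smul_eq_mul]
        have : #{i | φ i = some α} ≤ 1 := by
          rw [card_le_one]
          intro i hi i' hi'
          exact hφ i i' α (mem_filter.1 hi).2 (mem_filter.1 hi').2
        nlinarith
      omega
    calc _ = ‖∏ i, v i (φ i)‖ * ‖(Matrix.of fun i j => N i (φ i) j).det‖ := norm_mul _ _
      _ ≤ 1 * ρ ^ ∑ i, w (φ i) := mul_le_mul hv hN (norm_nonneg _) zero_le_one
      _ ≤ ρ ^ e := by rw [one_mul]; exact pow_le_pow_of_le_one hρ0 hρ1 hw
  · push Not at hφ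
    obtain ⟨i, i', α, hi, hi', hne⟩ := hφ
    rw [Matrix.det_zero_of_row_eq hne (by funext j; simp [N, hi, hi'])]
    simpa using pow_nonneg hρ0 _

end Det

/-! ### Taylor approximation of monomials -/

section Taylor

variable {p : ℕ} [Fact p.Prime] {m : ℕ}

/-- `g` agrees on `U` with a polynomial in `x - y` with `p`-adic integer coefficients, up to an
error `‖x - y‖ ^ r`. No bound on the degree of the polynomial is imposed, so that the property is
visibly stable under products. -/
def HasTaylor (r : ℕ) (U : Set (Fin m → ℚ_[p])) (y : Fin m → ℚ_[p])
    (g : (Fin m → ℚ_[p]) → ℚ_[p]) : Prop :=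
  ∃ q : MvPolynomial (Fin m) ℤ_[p], ∀ x ∈ U,
    ‖g x - MvPolynomial.aeval (fun i => x i - y i) q‖ ≤ ‖x - y‖ ^ r

lemma norm_aeval_le_one (w : Fin m → ℚ_[p]) (hw : ∀ i, ‖w i‖ ≤ 1)
    (q : MvPolynomial (Fin m) ℤ_[p]) : ‖MvPolynomial.aeval w q‖ ≤ 1 := by
  have := MvPolynomial.aeval_algebraMap_apply (A := ℤ_[p]) ℚ_[p]
    (fun i => (⟨w i, hw i⟩ : ℤ_[p])) q
  have h2 : (algebraMap ℤ_[p] ℚ_[p]) ∘ (fun i => (⟨w i, hw i⟩ : ℤ_[p])) = w := rfl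
  rw [h2] at this
  rw [this]
  exact PadicInt.norm_le_one _

lemma norm_le_one_of_sub {a b : ℚ_[p]} (h : ‖a - b‖ ≤ 1) (hb : ‖b‖ ≤ 1) : ‖a‖ ≤ 1 := by
  have := IsUltrametricDist.norm_add_le_max (a - b) b
  rw [sub_add_cancel] at this
  exact this.trans (max_le h hb)

lemma norm_sub_le_of_both_le {a b : ℚ_[p]} {C : ℝ} (ha : ‖a‖ ≤ C) (hb : ‖b‖ ≤ C) : ‖a - b‖ ≤ C := by
  rw [sub_eq_add_neg]
  exact (IsUltrametricDist.norm_add_le_max _ _).trans (max_le ha (by rwa [norm_neg]))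

lemma HasTaylor.mul {r : ℕ} {U : Set (Fin m → ℚ_[p])} {y : Fin m → ℚ_[p]}
    (hU : ∀ x ∈ U, ‖x - y‖ ≤ 1) {g h : (Fin m → ℚ_[p]) → ℚ_[p]}
    (hg : HasTaylor r U y g) (hh : HasTaylor r U y h) : HasTaylor r U y (g * h) := by
  obtain ⟨q, hq⟩ := hg
  obtain ⟨s, hs⟩ := hh
  refine ⟨q * s, fun x hx => ?_⟩
  have hw : ∀ i, ‖x i - y i‖ ≤ 1 := fun i => (norm_le_pi_norm (x - y) i).trans (hU x hx)
  have hq1 := norm_aeval_le_one _ hw q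
  have hs1 := norm_aeval_le_one _ hw s
  have hq' := hq x hx
  have hs' := hs x hx
  set Q := MvPolynomial.aeval (fun i => x i - y i) q
  set S := MvPolynomial.aeval (fun i => x i - y i) s
  have hpow : ‖x - y‖ ^ r ≤ 1 := pow_le_one₀ (norm_nonneg _) (hU x hx)
  have hh1 : ‖h x‖ ≤ 1 := norm_le_one_of_sub (hs'.trans hpow) hs1
  rw [map_mul, Pi.mul_apply,
    show g x * h x - Q * S = (g x - Q) * h x + Q * (h x - S) by ring]
  refine (IsUltrametricDist.norm_add_le_max _ _).trans (max_le ?_ ?_)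
  · rw [norm_mul]
    exact (mul_le_of_le_one_right (norm_nonneg _) hh1).trans hq'
  · rw [norm_mul]
    exact (mul_le_of_le_one_left (norm_nonneg _) hq1).trans hs'

lemma HasTaylor.one {r : ℕ} {U : Set (Fin m → ℚ_[p])} {y : Fin m → ℚ_[p]} :
    HasTaylor r U y 1 :=
  ⟨1, fun x _ => by simp⟩

lemma HasTaylor.monomial {r n : ℕ} {U : Set (Fin m → ℚ_[p])} {y : Fin m → ℚ_[p]}
    (hU : ∀ x ∈ U, ‖x - y‖ ≤ 1) {g : Fin n → (Fin m → ℚ_[p]) → ℚ_[p]}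
    (hg : ∀ k, HasTaylor r U y (g k)) (a : Fin n → ℕ) :
    HasTaylor r U y (∏ k, g k ^ a k) := by
  refine Finset.prod_induction _ (HasTaylor r U y) (fun _ _ => HasTaylor.mul hU) .one fun k _ => ?_
  induction a k with
  | zero => simpa using HasTaylor.one
  | succ l ih => rw [pow_succ]; exact HasTaylor.mul hU ih (hg k)

/-- Since `‖x - y‖ ≤ 1`, the monomials of degree `≥ r` can be absorbed in the error term. -/
lemma HasTaylor.truncate {r : ℕ} {U : Set (Fin m → ℚ_[p])} {y : Fin m → ℚ_[p]}
    (hU : ∀ x ∈ U, ‖x - y‖ ≤ 1) {g : (Fin m → ℚ_[p]) → ℚ_[p]}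
    (hg : HasTaylor r U y g) :
    ∃ c : (Fin m → ℕ) → ℚ_[p], (∀ α, ‖c α‖ ≤ 1) ∧ ∀ x ∈ U,
      ‖g x - ∑ α ∈ multiIdx m r, c α * ∏ i, (x i - y i) ^ α i‖ ≤ ‖x - y‖ ^ r := by
  classical
  obtain ⟨q, hq⟩ := hg
  refine ⟨fun α => (q.coeff (Finsupp.equivFunOnFinite.symm α) : ℤ_[p]),
    fun α => PadicInt.norm_le_one _, fun x hx => ?_⟩
  set t : (Fin m →₀ ℕ) → ℚ_[p] := fun d => (q.coeff d : ℤ_[p]) * ∏ i, (x i - y i) ^ d i with ht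
  set S : Finset (Fin m →₀ ℕ) :=
    (multiIdx m r).map Finsupp.equivFunOnFinite.symm.toEmbedding with hS
  have h1 : ∑ α ∈ multiIdx m r, ((q.coeff (Finsupp.equivFunOnFinite.symm α) : ℤ_[p]) : ℚ_[p]) *
      ∏ i, (x i - y i) ^ α i = ∑ d ∈ S, t d := by
    rw [hS, sum_map]
    rfl
  have h2 : MvPolynomial.aeval (fun i => x i - y i) q = ∑ d ∈ q.support ∪ S, t d := by
    rw [MvPolynomial.aeval_def, MvPolynomial.eval₂_eq']
    refine sum_subset subset_union_left fun d _ hd => ?_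
    rw [MvPolynomial.notMem_support_iff.1 hd]
    simp
  have h3 : ‖∑ d ∈ (q.support ∪ S) \ S, t d‖ ≤ ‖x - y‖ ^ r := by
    refine IsUltrametricDist.norm_sum_le_of_forall_le_of_nonneg (by positivity) fun d hd => ?_
    have hdr : r ≤ ∑ i, d i := by
      by_contra! hlt
      refine (mem_sdiff.1 hd).2 (mem_map.2 ⟨d, ?_, ?_⟩)
      · simp only [multiIdx, mem_filter, Fintype.mem_piFinset, mem_range]
        refine ⟨fun i => ?_, by omega⟩
        have := Finset.single_le_sum (f := d) (fun _ _ => Nat.zero_le _) (mem_univ i)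
        omega
      · ext; simp
    rw [ht]
    simp only [norm_mul, norm_prod, norm_pow]
    calc _ ≤ 1 * ∏ i, ‖x - y‖ ^ d i := by
          refine mul_le_mul (PadicInt.norm_le_one _) (prod_le_prod (fun _ _ => by positivity)
            fun i _ => ?_) (prod_nonneg fun _ _ => by positivity) zero_le_one
          gcongr
          exact norm_le_pi_norm (x - y) i
      _ = ‖x - y‖ ^ ∑ i, d i := by rw [one_mul, prod_pow_eq_pow_sum]
      _ ≤ ‖x - y‖ ^ r := pow_le_pow_of_le_one (norm_nonneg _) (hU x hx) hdr
  rw [h1]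
  have h4 := sum_sdiff (f := t) (subset_union_right : S ⊆ q.support ∪ S)
  rw [show g x - ∑ d ∈ S, t d = (g x - MvPolynomial.aeval (fun i => x i - y i) q) +
    ∑ d ∈ (q.support ∪ S) \ S, t d by rw [h2, ← h4]; ring]
  exact (IsUltrametricDist.norm_add_le_max _ _).trans (max_le (hq x hx) h3)

lemma SatisfiesT.hasTaylor {r n : ℕ} {U : Set (Fin m → ℚ_[p])}
    {ψ : (Fin m → ℚ_[p]) → (Fin n → ℚ_[p])} (hψ : SatisfiesT r m n U ψ)
    {y : Fin m → ℚ_[p]} (hy : y ∈ U) (k : Fin n) : HasTaylor r U y fun x => ψ x k := by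
  classical
  obtain ⟨c, -, hc, hx⟩ := hψ.2 y hy
  refine ⟨∑ α ∈ (multiIdx m r).attach, MvPolynomial.C
    (show ℤ_[p] from ⟨c α k, (norm_le_pi_norm (c α) k).trans (hc α α.2)⟩) *
      ∏ i, MvPolynomial.X i ^ (α : Fin m → ℕ) i, fun x hxU => ?_⟩
  refine le_trans (le_of_eq ?_) ((norm_le_pi_norm _ k).trans (hx x hxU))
  rw [Pi.sub_apply, Finset.sum_apply, map_sum, ← sum_attach (multiIdx m r)]
  congr 2
  refine sum_congr rfl fun α _ => ?_
  rw [map_mul, map_prod, MvPolynomial.aeval_C, Pi.smul_apply, smul_eq_mul, mul_comm]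
  simp only [map_pow, MvPolynomial.aeval_X]
  rfl

end Taylor

/-! ### Vanishing of the determinant -/

/-- Product formula inequality: `1 ≤ |N| * |N|_p` for a nonzero integer `N`. -/
lemma one_le_abs_mul_padic_norm (p : ℕ) [Fact p.Prime] {N : ℤ} (hN : N ≠ 0) :
    1 ≤ |(N : ℝ)| * ‖(N : ℚ_[p])‖ := by
  have hp : (0 : ℝ) < p := by exact_mod_cast (Fact.out : p.Prime).pos
  rw [Padic.norm_eq_zpow_neg_valuation (by exact_mod_cast hN), Padic.valuation_intCast, zpow_neg,
    zpow_natCast, ← div_eq_mul_inv, one_le_div (by positivity)]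
  have h : ((p ^ padicValInt p N : ℕ) : ℤ) ∣ N := by exact_mod_cast padicValInt_dvd (p := p) N
  have := Int.le_of_dvd (abs_pos.2 hN) ((dvd_abs _ _).2 h)
  exact_mod_cast this

/-- The vanishing-determinant step in the proof of Lemma `basicest`: with
`μ = D_n(d)`, `D_m(r-1) ≤ μ < D_m(r)`, `V = ∑_{k=0}^{d} k L_n(k)` and
`e = ∑_{k=0}^{r-1} k L_m(k) + r(μ - D_m(r-1))`, for points `P_1, …, P_μ` of a
closed ball `Σ ⊆ ℤ_p^m` of radius `ρ < (μ!)^{-1/e} T^{-V/e}` intersected with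
`U`, whose images under `ψ` have integer coordinates of archimedean absolute
value at most `T`, the determinant `det(ψ(P_j)^α)_{α ∈ Δ_n(d), j}` vanishes. -/
theorem determinant_vanishes (p : ℕ) [Fact p.Prime] (m n d : ℕ)
    (hm : 0 < m) (hmn : m < n) (hd : 1 ≤ d)
    (μ r : ℕ) (hμ : μ = (d + n).choose n)
    (hr : 0 < r) (hr₁ : (r - 1 + m).choose m ≤ μ) (hr₂ : μ < (r + m).choose m)
    (V e : ℕ)
    (hV : V = ∑ k ∈ Finset.range (d + 1), k * (k + n - 1).choose (n - 1))
    (he : e = ∑ k ∈ Finset.range r, k * (k + m - 1).choose (m - 1)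
            + r * (μ - (r - 1 + m).choose m))
    (T : ℝ) (hT : 1 < T)
    (U : Set (Fin m → ℚ_[p])) (hU : ∀ x ∈ U, ∀ i, ‖x i‖ ≤ 1)
    (ψ : (Fin m → ℚ_[p]) → (Fin n → ℚ_[p])) (hψ : SatisfiesT r m n U ψ)
    (z : Fin m → ℚ_[p]) (hz : ∀ i, ‖z i‖ ≤ 1)
    (ρ : ℝ) (hρ : ρ < (μ.factorial : ℝ) ^ (-(1 : ℝ) / e) * T ^ (-(V : ℝ) / e))
    (P : Fin μ → Fin m → ℚ_[p])
    (hP : ∀ j, P j ∈ Metric.closedBall z ρ ∩ U)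
    (hint : ∀ j i, ∃ a : ℤ, |(a : ℝ)| ≤ T ∧ (a : ℚ_[p]) = ψ (P j) i)
    (A : Fin μ → Fin n → ℕ)
    (hAinj : Function.Injective A)
    (hAmem : ∀ i, A i ∈ multiIdxLe n d)
    (hAsurj : ∀ α ∈ multiIdxLe n d, ∃ i, A i = α) :
    Matrix.det (Matrix.of fun i j => ∏ k, ψ (P j) k ^ A i k) = 0 := by
  classical
  have hμn : n + 1 ≤ μ := by
    rw [hμ]
    calc n + 1 = (1 + n).choose n := by rw [add_comm 1 n, Nat.choose_succ_self_right]
      _ ≤ _ := Nat.choose_le_choose n (by omega)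
  -- `r = 1` is excluded because `μ > n > m` while `D_m(1) = m + 1`.
  have hr2 : 2 ≤ r := by
    by_contra! h
    obtain rfl : r = 1 := by omega
    rw [add_comm 1 m, Nat.choose_succ_self_right] at hr₂
    omega
  have hepos : 0 < e := by
    have h1 := Finset.single_le_sum (f := fun k => k * (k + m - 1).choose (m - 1))
      (fun _ _ => Nat.zero_le _) (mem_range.2 (show 1 < r by omega))
    have h2 : 0 < (1 + m - 1).choose (m - 1) := Nat.choose_pos (by omega)
    simp only [one_mul] at h1
    omega
  have hT0 : (0 : ℝ) < T := by linarith
  have hfac : (1 : ℝ) ≤ μ.factorial := by exact_mod_cast μ.factorial_pos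
  have hfac0 : (0 : ℝ) < μ.factorial := by linarith
  let j₀ : Fin μ := ⟨0, by omega⟩
  have hρ0 : 0 ≤ ρ := dist_nonneg.trans (Metric.mem_closedBall.1 (hP j₀).1)
  have hρe : ρ ^ e < (μ.factorial * T ^ V : ℝ)⁻¹ := by
    refine (pow_lt_pow_left₀ hρ hρ0 hepos.ne').trans_eq ?_
    have he0 : (e : ℝ) ≠ 0 := by exact_mod_cast hepos.ne'
    rw [mul_pow, ← Real.rpow_natCast, ← Real.rpow_natCast, ← Real.rpow_mul hfac0.le,
      ← Real.rpow_mul hT0.le, div_mul_cancel₀ _ he0, div_mul_cancel₀ _ he0, Real.rpow_neg_one,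
      Real.rpow_neg hT0.le, Real.rpow_natCast, mul_inv]
  have hTV : (1 : ℝ) ≤ μ.factorial * T ^ V :=
    one_le_mul_of_one_le_of_one_le hfac (one_le_pow₀ hT.le)
  have hρ1 : ρ ≤ 1 := by
    by_contra! h
    have h1 := one_le_pow₀ h.le (n := e)
    have h2 := inv_le_one_of_one_le₀ hTV
    linarith
  -- The `p`-adic estimate, expanding around `P j₀`.
  have hyU : P j₀ ∈ U := (hP j₀).2
  have hU1 : ∀ x ∈ U, ‖x - P j₀‖ ≤ 1 := by
    intro x hx
    refine (pi_norm_le_iff_of_nonneg zero_le_one).2 fun i => ?_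
    exact norm_sub_le_of_both_le (hU x hx i) (hU _ hyU i)
  have hdist : ∀ j, ‖P j - P j₀‖ ≤ ρ := by
    intro j
    have h1 := mem_closedBall_iff_norm.1 (hP j).1
    have h2 := mem_closedBall_iff_norm.1 (hP j₀).1
    refine (pi_norm_le_iff_of_nonneg hρ0).2 fun i => ?_
    rw [Pi.sub_apply, ← sub_sub_sub_cancel_right _ _ (z i)]
    exact norm_sub_le_of_both_le ((norm_le_pi_norm _ i).trans h1) ((norm_le_pi_norm _ i).trans h2)
  have hTay : ∀ i, HasTaylor r U (P j₀) (∏ k, (fun x => ψ x k) ^ A i k) :=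
    fun i => HasTaylor.monomial hU1 (fun k => hψ.hasTaylor hyU k) (A i)
  choose c hc hcx using fun i => (hTay i).truncate hU1
  have hpadic : ‖Matrix.det (Matrix.of fun i j => ∏ k, ψ (P j) k ^ A i k)‖ ≤ ρ ^ e := by
    refine norm_det_le_pow (I := multiIdx m r) (fun α => ∑ i, (α : Fin m → ℕ) i) r e
      (fun α => ?_) ?_ ρ hρ0 hρ1 _ (fun i α => c i α)
      (fun α j => ∏ i, (P j i - P j₀ i) ^ (α : Fin m → ℕ) i) (fun i α => hc i α)
      (fun α j => ?_) (fun i j => ?_)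
    · have := (mem_filter.1 α.2).2
      omega
    · rw [Fintype.card_fin, ← exponent_identity hm hr hr₁ he,
        ← Finset.sum_coe_sort (multiIdx m r)]
    · rw [norm_prod, ← prod_pow_eq_pow_sum]
      refine prod_le_prod (fun _ _ => norm_nonneg _) fun i _ => ?_
      rw [norm_pow]
      gcongr
      exact (norm_le_pi_norm (P j - P j₀) i).trans (hdist j)
    · have h := hcx i (P j) (hP j).2
      rw [← Finset.sum_coe_sort (multiIdx m r)] at h
      simp only [Finset.prod_apply, Pi.pow_apply] at h
      exact h.trans (pow_le_pow_left₀ (norm_nonneg _) (hdist j) r)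
  -- The determinant is the image of a rational integer `N`.
  choose a haT ha using hint
  set B : Matrix (Fin μ) (Fin μ) ℤ := Matrix.of fun i j => ∏ k, a j k ^ A i k with hB
  have hdet : Matrix.det (Matrix.of fun i j => ∏ k, ψ (P j) k ^ A i k) = ((B.det : ℤ) : ℚ_[p]) := by
    refine Eq.trans ?_ ((Int.castRingHom ℚ_[p]).map_det B).symm
    congr 1
    ext i j
    simp [hB, ha]
  rw [hdet] at hpadic ⊢
  have hVA : ∑ i, ∑ k, A i k = V := by
    have himg : univ.image A = multiIdx n (d + 1) := by
      ext α
      simp only [mem_image, mem_univ, true_and]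
      exact ⟨fun ⟨i, hi⟩ => hi ▸ hAmem i, fun h => hAsurj α h⟩
    rw [← sum_image (f := fun α : Fin n → ℕ => ∑ k, α k) hAinj.injOn, himg,
      sum_multiIdx (by omega) (by omega) fun k => k, hV]
    exact sum_congr rfl fun k _ => mul_comm _ _
  have harch : |(B.det : ℝ)| ≤ μ.factorial * T ^ V := by
    rw [← Matrix.det_transpose, Matrix.det_apply, Int.cast_sum]
    refine (abs_sum_le_sum_abs _ _).trans ?_
    refine (sum_le_card_nsmul _ _ (T ^ V) fun σ _ => ?_).trans_eq (by
      rw [card_univ, Fintype.card_perm, Fintype.card_fin, nsmul_eq_mul])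
    have : |((Equiv.Perm.sign σ • ∏ i, B.transpose (σ i) i : ℤ) : ℝ)|
        = ∏ i, ∏ k, |(a (σ i) k : ℝ)| ^ A i k := by
      rcases Int.units_eq_one_or (Equiv.Perm.sign σ) with h | h <;>
        simp [h, hB, abs_prod]
    rw [this, ← hVA, ← prod_pow_eq_pow_sum]
    refine prod_le_prod (fun _ _ => by positivity) fun i _ => ?_
    rw [← prod_pow_eq_pow_sum]
    refine prod_le_prod (fun _ _ => by positivity) fun k _ => ?_
    gcongr
    exact haT _ _
  by_contra hne
  have hN : B.det ≠ 0 := fun h => hne (by rw [h]; simp)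
  have h1 := one_le_abs_mul_padic_norm p hN
  have hpos : (0 : ℝ) < μ.factorial * T ^ V := by linarith
  have h2 : |(B.det : ℝ)| * ‖(B.det : ℚ_[p])‖ < 1 := by
    calc _ ≤ (μ.factorial * T ^ V) * ‖(B.det : ℚ_[p])‖ := by gcongr
      _ ≤ (μ.factorial * T ^ V) * ρ ^ e := by gcongr
      _ < (μ.factorial * T ^ V) * (μ.factorial * T ^ V)⁻¹ := by gcongr
      _ = 1 := mul_inv_cancel₀ hpos.ne'
  linarith
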